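/- arXiv:2303.02557 — 3 statements merged into one kernel-verified Lean document; each statement's English description precedes it below -/
import Mathlib

section
/- Let Q be the optimal Q-function for reward r, let f : ℝ → ℝ satisfy: (1) f is concave; (2i) f(x+y) ≥ f(x) + f(y) for all x, y; (2ii) f(γx) ≥ γ·f(x) for all x; (3) f(max_{a∈A} 𝒬(s,a)) ≥ max_{a∈A} f(𝒬(s,a)) for every function 𝒬 : S × A → ℝ and every s, and let Q̃ be the optimal Q-function for reward (s,a) ↦ f(r(s,a)). Define V_f(s) = max_{a∈A} f(Q(s,a)), let Ĉ be the optimal Q-function for reward r̂_C(s,a) = f(Q(s,a)) − f(r(s,a)) − γ·∑_{s'} p(s'|s,a)·V_f(s'), and let π_f be the greedy policy π_f(s) ∈ argmax_{a∈A} f(Q(s,a)). Let Q̃^{π_f} be the value of π_f for reward (s,a) ↦ f(r(s,a)), and let D̂ satisfy D̂(s,a) = r̂_D(s,a) + γ·∑_{s'} p(s'|s,a)·D̂(s', π_f(s')) where r̂_D(s,a) = γ·∑_{s'} p(s'|s,a)·[V_f(s') − f(Q(s', π_f(s'))) + Ĉ(s', π_f(s'))]. Then for all (s,a): Q̃(s,a)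 − Q̃^{π_f}(s,a) ≤ D̂(s,a). -/
/-!
Write `P v` for the discounted expected value of `v` at the next state. If `E ≤ P E(·, σ)` along
some policy `σ` then `E ≤ 0`, as one sees at a maximizing state; hence sub- and supersolutions of a
Bellman equation are ordered.

The conditions on `f` and Jensen's inequality make `f ∘ Q` a supersolution of the Bellman equation
for the reward `f ∘ r`, so `Q̃ ≤ f ∘ Q`. By the choice of `r̂_C`, `f ∘ Q` is the optimal Q-function
for `f ∘ r + r̂_C`, and optimal Q-functions are subadditive in the reward, so `f ∘ Q ≤ Q̃ + Ĉ`. As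
`π_f` is greedy for `f ∘ Q`, these bounds give `max Q̃(s', ·) ≤ (Q̃ + Ĉ)(s', π_f s')`, while
`r̂_D = P Ĉ(·, π_f)`. So `Q̃` is a subsolution of the evaluation equation of `π_f` for the reward
`f ∘ r + r̂_D`, whose solution is `Q̃^{π_f} + D̂`.
-/

open Finset

/-- Maximum of a real-valued function over a nonempty finite action set. -/
noncomputable def amax {A : Type*} [Fintype A] [Nonempty A] (g : A → ℝ) : ℝ :=
  Finset.univ.sup' Finset.univ_nonempty g

section amax

variable {A : Type*} [Fintype A] [Nonempty A]

lemma le_amax (g : A → ℝ) (a : A) : g a ≤ amax g :=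
  Finset.le_sup' g (Finset.mem_univ a)

lemma amax_le {g : A → ℝ} {c : ℝ} (h : ∀ a, g a ≤ c) : amax g ≤ c :=
  Finset.sup'_le _ _ fun a _ => h a

lemma amax_eq_of_forall_le {g : A → ℝ} {a : A} (h : ∀ b, g b ≤ g a) : amax g = g a :=
  le_antisymm (amax_le h) (le_amax g a)

lemma amax_add_le (g h : A → ℝ) : amax (g + h) ≤ amax g + amax h :=
  amax_le fun a => add_le_add (le_amax g a) (le_amax h a)

end amax

section discountedMean

variable {S A : Type*} [Fintype S] {γ : ℝ} {p : S → A → S → ℝ}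

/-- The discounted expected value of `v` at the next state, for the transition kernel `p` and the
discount factor `γ`, bundled as a linear map in `v`. -/
noncomputable def discountedMean (γ : ℝ) (p : S → A → S → ℝ) : (S → ℝ) →ₗ[ℝ] (S → A → ℝ) where
  toFun v s a := γ * ∑ s', p s a s' * v s'
  map_add' v w := by
    ext s a
    simp only [Pi.add_apply, mul_add, Finset.sum_add_distrib]
  map_smul' c v := by
    ext s a
    simp only [Pi.smul_apply, smul_eq_mul, RingHom.id_apply, Finset.mul_sum, mul_left_comm c]

lemma discountedMean_apply (v : S → ℝ) (s : S) (a : A) :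
    discountedMean γ p v s a = γ * ∑ s', p s a s' * v s' :=
  rfl

lemma discountedMean_mono (hγ : 0 ≤ γ) (hp : ∀ s a s', 0 ≤ p s a s') :
    Monotone (discountedMean γ p) := fun _ _ hvw s a =>
  mul_le_mul_of_nonneg_left
    (Finset.sum_le_sum fun s' _ => mul_le_mul_of_nonneg_left (hvw s') (hp s a s')) hγ

lemma add_discountedMean_comp_le {f : ℝ → ℝ} (hγ : 0 ≤ γ) (hp : ∀ s a s', 0 ≤ p s a s')
    (hp_sum : ∀ s a, ∑ s', p s a s' = 1) (hf_concave : ConcaveOn ℝ Set.univ f)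
    (hf_superadd : ∀ x y, f x + f y ≤ f (x + y)) (hf_superhom : ∀ x, γ * f x ≤ f (γ * x))
    (x : ℝ) (v : S → ℝ) (s : S) (a : A) :
    f x + discountedMean γ p (f ∘ v) s a ≤ f (x + discountedMean γ p v s a) := by
  have jensen : ∑ s', p s a s' * f (v s') ≤ f (∑ s', p s a s' * v s') :=
    hf_concave.le_map_sum (fun s' _ => hp s a s') (hp_sum s a) fun _ _ => Set.mem_univ _
  calc f x + γ * ∑ s', p s a s' * f (v s')
      ≤ f x + γ * f (∑ s', p s a s' * v s') := by gcongr
    _ ≤ f x + f (γ * ∑ s', p s a s' * v s') := by gcongr; exact hf_superhom _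
    _ ≤ f (x + γ * ∑ s', p s a s' * v s') := hf_superadd _ _

/-- `p` is a transition kernel and `γ` a discount factor, as in discounted dynamic programming. The
kernel may be substochastic, the missing mass being the probability of termination. -/
structure IsDiscountedKernel (γ : ℝ) (p : S → A → S → ℝ) : Prop where
  discount_nonneg : 0 ≤ γ
  discount_lt_one : γ < 1
  nonneg : ∀ s a s', 0 ≤ p s a s'
  sum_le_one : ∀ s a, ∑ s', p s a s' ≤ 1

namespace IsDiscountedKernel

lemma monotone (hp : IsDiscountedKernel γ p) : Monotone (discountedMean γ p) :=
  discountedMean_mono hp.discount_nonneg hp.nonneg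

lemma discountedMean_const_le (hp : IsDiscountedKernel γ p) {c : ℝ} (hc : 0 ≤ c) (s : S) (a : A) :
    discountedMean γ p (fun _ => c) s a ≤ γ * c := by
  rw [discountedMean_apply, ← Finset.sum_mul]
  exact mul_le_mul_of_nonneg_left (mul_le_of_le_one_left hc (hp.sum_le_one s a))
    hp.discount_nonneg

theorem nonpos_of_le_discountedMean (hp : IsDiscountedKernel γ p) {E : S → A → ℝ} {σ : S → A}
    (hE : E ≤ discountedMean γ p fun s => E s (σ s)) : E ≤ 0 := by
  have hEσ : (fun s => E s (σ s)) ≤ 0 := by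
    intro s
    have : Nonempty S := ⟨s⟩
    obtain ⟨s₀, hs₀⟩ := Finite.exists_max fun s => E s (σ s)
    refine (hs₀ s).trans (not_lt.mp fun (hpos : 0 < E s₀ (σ s₀)) => ?_)
    have hself : E s₀ (σ s₀) ≤ γ * E s₀ (σ s₀) :=
      calc E s₀ (σ s₀) ≤ discountedMean γ p (fun s => E s (σ s)) s₀ (σ s₀) := hE _ _
        _ ≤ discountedMean γ p (fun _ => E s₀ (σ s₀)) s₀ (σ s₀) := hp.monotone hs₀ _ _
        _ ≤ γ * E s₀ (σ s₀) := hp.discountedMean_const_le hpos.le _ _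
    exact (mul_lt_of_lt_one_left hpos hp.discount_lt_one).not_ge hself
  calc E ≤ discountedMean γ p fun s => E s (σ s) := hE
    _ ≤ discountedMean γ p 0 := hp.monotone hEσ
    _ = 0 := map_zero _

end IsDiscountedKernel

end discountedMean

section Bellman

variable {S A : Type*} [Fintype S] {γ : ℝ} {p : S → A → S → ℝ}

/-- The Bellman evaluation operator of the deterministic policy `π` for the reward `r`. -/
noncomputable def policyBackup (γ : ℝ) (p : S → A → S → ℝ) (r : S → A → ℝ) (π : S → A)
    (Q : S → A → ℝ) : S → A → ℝ :=
  r + discountedMean γ p fun s => Q s (π s)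

/-- `Q` is the value of the policy `π` for the reward `r`, encoded as a solution of the policy
evaluation equation. -/
def IsPolicyValue (γ : ℝ) (p : S → A → S → ℝ) (r : S → A → ℝ) (π : S → A) (Q : S → A → ℝ) : Prop :=
  Q = policyBackup γ p r π Q

lemma policyBackup_add (r₁ r₂ : S → A → ℝ) (π : S → A) (Q₁ Q₂ : S → A → ℝ) :
    policyBackup γ p (r₁ + r₂) π (Q₁ + Q₂) =
      policyBackup γ p r₁ π Q₁ + policyBackup γ p r₂ π Q₂ := by
  unfold policyBackup
  rw [add_add_add_comm, ← map_add]
  rfl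

lemma IsPolicyValue.add {r₁ r₂ Q₁ Q₂ : S → A → ℝ} {π : S → A} (h₁ : IsPolicyValue γ p r₁ π Q₁)
    (h₂ : IsPolicyValue γ p r₂ π Q₂) : IsPolicyValue γ p (r₁ + r₂) π (Q₁ + Q₂) :=
  (congrArg₂ (· + ·) h₁ h₂).trans (policyBackup_add r₁ r₂ π Q₁ Q₂).symm

theorem IsDiscountedKernel.le_of_le_policyBackup_of_policyBackup_le (hp : IsDiscountedKernel γ p)
    {r Q₁ Q₂ : S → A → ℝ} {π : S → A} (h₁ : Q₁ ≤ policyBackup γ p r π Q₁)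
    (h₂ : policyBackup γ p r π Q₂ ≤ Q₂) : Q₁ ≤ Q₂ := by
  refine sub_nonpos.mp (hp.nonpos_of_le_discountedMean (σ := π) ?_)
  calc Q₁ - Q₂ ≤ policyBackup γ p r π Q₁ - policyBackup γ p r π Q₂ := sub_le_sub h₁ h₂
    _ = discountedMean γ p fun s => (Q₁ - Q₂) s (π s) := by
      unfold policyBackup
      rw [add_sub_add_left_eq_sub, ← map_sub]
      rfl

variable [Fintype A] [Nonempty A]

/-- The Bellman optimality operator for the reward `r`. -/
noncomputable def optimalBackup (γ : ℝ) (p : S → A → S → ℝ) (r Q : S → A → ℝ) : S → A → ℝ :=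
  r + discountedMean γ p fun s => amax (Q s)

/-- `Q` is the optimal Q-function for the reward `r`, encoded as a solution of the Bellman
optimality equation. -/
def IsOptimalQ (γ : ℝ) (p : S → A → S → ℝ) (r Q : S → A → ℝ) : Prop :=
  Q = optimalBackup γ p r Q

namespace IsDiscountedKernel

lemma policyBackup_le_optimalBackup (hp : IsDiscountedKernel γ p) (r : S → A → ℝ) (π : S → A)
    (Q : S → A → ℝ) : policyBackup γ p r π Q ≤ optimalBackup γ p r Q :=
  add_le_add_right (hp.monotone fun s => le_amax (Q s) (π s)) r

theorem le_of_le_optimalBackup_of_optimalBackup_le (hp : IsDiscountedKernel γ p)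
    {r Q₁ Q₂ : S → A → ℝ} (h₁ : Q₁ ≤ optimalBackup γ p r Q₁)
    (h₂ : optimalBackup γ p r Q₂ ≤ Q₂) : Q₁ ≤ Q₂ := by
  choose σ hσ using fun s => Finite.exists_max (Q₁ s)
  have hgreedy : optimalBackup γ p r Q₁ = policyBackup γ p r σ Q₁ := by
    simp only [optimalBackup, policyBackup, amax_eq_of_forall_le (hσ _)]
  exact hp.le_of_le_policyBackup_of_policyBackup_le (h₁.trans_eq hgreedy)
    ((hp.policyBackup_le_optimalBackup r σ Q₂).trans h₂)

lemma optimalBackup_add_le (hp : IsDiscountedKernel γ p) (r₁ r₂ Q₁ Q₂ : S → A → ℝ) :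
    optimalBackup γ p (r₁ + r₂) (Q₁ + Q₂) ≤ optimalBackup γ p r₁ Q₁ + optimalBackup γ p r₂ Q₂ :=
  calc r₁ + r₂ + discountedMean γ p (fun s => amax ((Q₁ + Q₂) s))
      ≤ r₁ + r₂ + discountedMean γ p ((fun s => amax (Q₁ s)) + fun s => amax (Q₂ s)) := by
        gcongr
        exact hp.monotone fun s => amax_add_le (Q₁ s) (Q₂ s)
    _ = optimalBackup γ p r₁ Q₁ + optimalBackup γ p r₂ Q₂ := by
        rw [map_add, add_add_add_comm]
        rfl

end IsDiscountedKernel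

namespace IsOptimalQ

theorem le_add (hp : IsDiscountedKernel γ p) {r₁ r₂ Q₁ Q₂ Q : S → A → ℝ}
    (h₁ : IsOptimalQ γ p r₁ Q₁) (h₂ : IsOptimalQ γ p r₂ Q₂) (h : IsOptimalQ γ p (r₁ + r₂) Q) :
    Q ≤ Q₁ + Q₂ :=
  hp.le_of_le_optimalBackup_of_optimalBackup_le h.le <|
    (hp.optimalBackup_add_le r₁ r₂ Q₁ Q₂).trans (add_le_add h₁.ge h₂.ge)

theorem optimalBackup_comp_le {f : ℝ → ℝ} {r Q : S → A → ℝ} (hQ : IsOptimalQ γ p r Q)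
    (hγ : 0 ≤ γ) (hp : ∀ s a s', 0 ≤ p s a s') (hp_sum : ∀ s a, ∑ s', p s a s' = 1)
    (hf_concave : ConcaveOn ℝ Set.univ f) (hf_superadd : ∀ x y, f x + f y ≤ f (x + y))
    (hf_superhom : ∀ x, γ * f x ≤ f (γ * x))
    (hf_max : ∀ s, amax (fun a => f (Q s a)) ≤ f (amax (Q s))) :
    optimalBackup γ p (fun s a => f (r s a)) (fun s a => f (Q s a)) ≤ fun s a => f (Q s a) :=
  fun s a =>
    calc f (r s a) + discountedMean γ p (fun s => amax fun a => f (Q s a)) s a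
        ≤ f (r s a) + discountedMean γ p (f ∘ fun s => amax (Q s)) s a := by
          gcongr
          exact discountedMean_mono hγ hp hf_max s a
      _ ≤ f (r s a + discountedMean γ p (fun s => amax (Q s)) s a) :=
          add_discountedMean_comp_le hγ hp hp_sum hf_concave hf_superadd hf_superhom _ _ s a
      _ = f (Q s a) := congrArg f (congrFun₂ hQ s a).symm

theorem sub_policyValue_le_of_greedy (hp : IsDiscountedKernel γ p) {r Q g C Qπ D : S → A → ℝ}
    {π : S → A} (hQ : IsOptimalQ γ p r Q) (hQπ : IsPolicyValue γ p r π Qπ)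
    (hπ : ∀ s a, g s a ≤ g s (π s)) (hQg : Q ≤ g) (hgC : g ≤ Q + C)
    (hD : IsPolicyValue γ p (discountedMean γ p fun s => C s (π s)) π D) : Q - Qπ ≤ D := by
  have hmax (s : S) : amax (Q s) ≤ C s (π s) + Q s (π s) :=
    amax_le fun a =>
      calc Q s a ≤ g s a := hQg s a
        _ ≤ g s (π s) := hπ s a
        _ ≤ Q s (π s) + C s (π s) := hgC s (π s)
        _ = C s (π s) + Q s (π s) := add_comm _ _
  have hsub : Q ≤ policyBackup γ p (r + discountedMean γ p fun s => C s (π s)) π Q :=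
    calc Q = r + discountedMean γ p fun s => amax (Q s) := hQ
      _ ≤ r + discountedMean γ p ((fun s => C s (π s)) + fun s => Q s (π s)) := by
        gcongr
        exact hp.monotone hmax
      _ = (r + discountedMean γ p fun s => C s (π s)) + discountedMean γ p fun s => Q s (π s) := by
        rw [map_add, add_assoc]
  exact sub_le_iff_le_add'.mpr
    (hp.le_of_le_policyBackup_of_policyBackup_le hsub (hQπ.add hD).ge)

end IsOptimalQ

end Bellman

/-- **Regret bound for the zero-shot greedy policy, concave conditions, standard RL (Lemma 4.4).** -/
theorem concave_conditions_regret_standard_rl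
    {S A : Type*} [Fintype S] [Fintype A] [Nonempty S] [Nonempty A]
    (p : S → A → S → ℝ)
    (hp_nonneg : ∀ s a s', 0 ≤ p s a s')
    (hp_sum : ∀ s a, ∑ s', p s a s' = 1)
    (γ : ℝ) (hγ0 : 0 < γ) (hγ1 : γ < 1)
    (r : S → A → ℝ)
    -- Q is the optimal Q-function for reward r
    (Q : S → A → ℝ)
    (hQ : ∀ s a, Q s a = r s a + γ * ∑ s', p s a s' * amax (fun a' => Q s' a'))
    -- the transformation function f and its conditions
    (f : ℝ → ℝ)
    (hf_concave : ConcaveOn ℝ Set.univ f)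
    (hf_superadd : ∀ x y, f x + f y ≤ f (x + y))
    (hf_superhom : ∀ x, γ * f x ≤ f (γ * x))
    (hf_max : ∀ (𝒬 : S → A → ℝ) (s : S),
      amax (fun a => f (𝒬 s a)) ≤ f (amax (fun a => 𝒬 s a)))
    -- Q̃ is the optimal Q-function for the transformed reward f ∘ r
    (Qt : S → A → ℝ)
    (hQt : ∀ s a, Qt s a = f (r s a) + γ * ∑ s', p s a s' * amax (fun a' => Qt s' a'))
    -- V_f, the auxiliary reward r̂_C, and Ĉ the optimal Q-function for r̂_C
    (Vf : S → ℝ)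
    (hVf : ∀ s, Vf s = amax (fun a => f (Q s a)))
    (rCh : S → A → ℝ)
    (hrCh : ∀ s a, rCh s a = f (Q s a) - f (r s a) - γ * (∑ s', p s a s' * Vf s'))
    (Ch : S → A → ℝ)
    (hCh : ∀ s a, Ch s a = rCh s a + γ * ∑ s', p s a s' * amax (fun a' => Ch s' a'))
    -- π_f is the greedy policy w.r.t. f(Q(s,·))
    (πf : S → A)
    (hπf : ∀ s a, f (Q s a) ≤ f (Q s (πf s)))
    -- Q̃^{π_f} is the value of π_f on the transformed task
    (Qpf : S → A → ℝ)
    (hQpf : ∀ s a, Qpf s a = f (r s a) + γ * ∑ s', p s a s' * Qpf s' (πf s'))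
    -- the auxiliary reward r̂_D and the value D̂ of π_f in the task with reward r̂_D
    (rDh : S → A → ℝ)
    (hrDh : ∀ s a, rDh s a = γ * ∑ s', p s a s' *
      (Vf s' - f (Q s' (πf s')) + Ch s' (πf s')))
    (Dh : S → A → ℝ)
    (hDh : ∀ s a, Dh s a = rDh s a + γ * ∑ s', p s a s' * Dh s' (πf s')) :
    ∀ s a, Qt s a - Qpf s a ≤ Dh s a := by
  have hp : IsDiscountedKernel γ p := ⟨hγ0.le, hγ1, hp_nonneg, fun s a => (hp_sum s a).le⟩
  have hQ_opt : IsOptimalQ γ p r Q := funext₂ hQ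
  have hQt_opt : IsOptimalQ γ p (fun s a => f (r s a)) Qt := funext₂ hQt
  have hupper : Qt ≤ fun s a => f (Q s a) :=
    hp.le_of_le_optimalBackup_of_optimalBackup_le hQt_opt.le <|
      hQ_opt.optimalBackup_comp_le hγ0.le hp_nonneg hp_sum hf_concave hf_superadd hf_superhom
        (hf_max Q)
  have hfQ_opt : IsOptimalQ γ p ((fun s a => f (r s a)) + rCh) fun s a => f (Q s a) := by
    ext s a
    simp only [optimalBackup, Pi.add_apply, discountedMean_apply, hrCh, hVf]
    ring
  have hlower : (fun s a => f (Q s a)) ≤ Qt + Ch := hQt_opt.le_add hp (funext₂ hCh) hfQ_opt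
  have hrDh_eq : rDh = discountedMean γ p fun s => Ch s (πf s) := by
    ext s a
    simp only [hrDh, hVf, amax_eq_of_forall_le (hπf _), sub_self, zero_add, discountedMean_apply]
  have hDh_val : IsPolicyValue γ p (discountedMean γ p fun s => Ch s (πf s)) πf Dh :=
    hrDh_eq ▸ funext₂ hDh
  exact hQt_opt.sub_policyValue_le_of_greedy hp (funext₂ hQpf) hπf hupper hlower hDh_val
end

section
/- For k = 1, …, M (with M ≥ 1), let Q^(k) be the optimal Q-function for reward r^(k). If Q̃ is the optimal Q-function for the AND-composite reward (s,a) ↦ min_{1≤k≤M} r^(k)(s,a), then for all (s,a): Q̃(s,a) ≤ min_{1≤k≤M} Q^(k)(s,a). -/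
/-!
The value function `V s = max_a Q s a` of an optimal Q-function is a fixed point of the Bellman
operator, which is monotone, also in the reward, and turns a shift of `V` by `c ≥ 0` into a shift
of at most `γ * c`. The minimum reward lies below each `r k`, so the composite value function is a
subsolution of the Bellman equation for `r k`. If `D > 0` were its largest excess over the solution,
applying the operator once would give `D ≤ γ * D`, which contradicts `γ < 1`. One further Bellman
backup carries the comparison of value functions over to the Q-functions.
-/

open Finset

/-- Minimum of a real-valued function over a nonempty finite (index or action) set. -/
noncomputable def amin {A : Type*} [Fintype A] [Nonempty A] (g : A → ℝ) : ℝ :=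
  Finset.univ.inf' Finset.univ_nonempty g

theorem amax_mono {A : Type*} [Fintype A] [Nonempty A] :
    Monotone (amax : (A → ℝ) → ℝ) :=
  fun _ _ h => Finset.sup'_mono_fun fun a _ => h a

theorem amax_add_const {A : Type*} [Fintype A] [Nonempty A] (g : A → ℝ) (c : ℝ) :
    amax (fun a => g a + c) = amax g + c :=
  (Finset.sup'_add univ g c univ_nonempty).symm

theorem amin_le {ι : Type*} [Fintype ι] [Nonempty ι] (g : ι → ℝ) (i : ι) : amin g ≤ g i :=
  Finset.inf'_le g (mem_univ i)

/-- `hmono` and `hdisc` are Blackwell's sufficient conditions for a discounted contraction. -/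
theorem le_of_monotone_of_discounting {X : Type*} {T : (X → ℝ) → X → ℝ} {γ : ℝ} {f g : X → ℝ}
    (hmono : Monotone T)
    (hdisc : ∀ (h : X → ℝ) (c : ℝ), 0 ≤ c → ∀ x, T (fun y => h y + c) x ≤ T h x + γ * c)
    (hγ1 : γ < 1) (hf : f ≤ T f) (hg : T g ≤ g)
    (hbdd : BddAbove (Set.range fun x => f x - g x)) : f ≤ g := by
  intro x
  by_contra! hx
  have : Nonempty X := ⟨x⟩
  set D := ⨆ y, (f y - g y)
  have hle : ∀ y, f y - g y ≤ D := le_ciSup hbdd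
  have hD : 0 < D := (sub_pos.mpr hx).trans_le (hle x)
  have hshift : f ≤ fun y => g y + D := fun y => sub_le_iff_le_add'.mp (hle y)
  have hexcess (y : X) : f y - g y ≤ γ * D := by
    rw [sub_le_iff_le_add']
    calc
      f y ≤ T f y := hf y
      _ ≤ T (fun z => g z + D) y := hmono hshift y
      _ ≤ T g y + γ * D := hdisc g D hD.le y
      _ ≤ g y + γ * D := by gcongr; exact hg y
  exact (mul_lt_of_lt_one_left hD hγ1).not_ge (ciSup_le hexcess)

section Bellman

variable {S A : Type*} [Fintype S] {p : S → A → S → ℝ} {γ : ℝ}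

/-- The Bellman backup of a value function `V`: the Q-function obtained by collecting the reward
`r` for one step and continuing with value `V`, discounted by `γ`. Here `p s a s'` is the
weight of the transition to `s'`, and total mass below `1` models termination. -/
def bellmanBackup (p : S → A → S → ℝ) (γ : ℝ) (r : S → A → ℝ) (V : S → ℝ) (s : S) (a : A) : ℝ :=
  r s a + γ * ∑ s', p s a s' * V s'

theorem bellmanBackup_mono (hp_nonneg : ∀ s a s', 0 ≤ p s a s') (hγ0 : 0 ≤ γ)
    {r r' : S → A → ℝ} (hr : r ≤ r') {V V' : S → ℝ} (hV : V ≤ V') :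
    bellmanBackup p γ r V ≤ bellmanBackup p γ r' V' := by
  intro s a
  unfold bellmanBackup
  gcongr with s'
  · exact hr s a
  · exact hp_nonneg s a s'
  · exact hV s'

theorem bellmanBackup_add_const_le (hp_sum : ∀ s a, ∑ s', p s a s' ≤ 1) (hγ0 : 0 ≤ γ)
    (r : S → A → ℝ) (V : S → ℝ) {c : ℝ} (hc : 0 ≤ c) (s : S) (a : A) :
    bellmanBackup p γ r (fun s' => V s' + c) s a ≤ bellmanBackup p γ r V s a + γ * c := by
  have hmass : (∑ s', p s a s') * c ≤ c := mul_le_of_le_one_left hc (hp_sum s a)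
  calc
    bellmanBackup p γ r (fun s' => V s' + c) s a
        = bellmanBackup p γ r V s a + γ * ((∑ s', p s a s') * c) := by
      simp only [bellmanBackup, mul_add, sum_add_distrib, sum_mul, add_assoc]
    _ ≤ bellmanBackup p γ r V s a + γ * c := by gcongr

variable [Fintype A] [Nonempty A]

/-- The Bellman optimality operator on value functions: the best Bellman backup over all
actions. -/
noncomputable def bellmanOperator (p : S → A → S → ℝ) (γ : ℝ) (r : S → A → ℝ) (V : S → ℝ)
    (s : S) : ℝ :=
  amax (bellmanBackup p γ r V s)

theorem bellmanOperator_mono (hp_nonneg : ∀ s a s', 0 ≤ p s a s') (hγ0 : 0 ≤ γ)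
    (r : S → A → ℝ) : Monotone (bellmanOperator p γ r) :=
  fun _ _ hV s => amax_mono (bellmanBackup_mono hp_nonneg hγ0 le_rfl hV s)

theorem bellmanOperator_add_const_le (hp_sum : ∀ s a, ∑ s', p s a s' ≤ 1) (hγ0 : 0 ≤ γ)
    (r : S → A → ℝ) (V : S → ℝ) {c : ℝ} (hc : 0 ≤ c) (s : S) :
    bellmanOperator p γ r (fun s' => V s' + c) s ≤ bellmanOperator p γ r V s + γ * c :=
  calc
    bellmanOperator p γ r (fun s' => V s' + c) s
        ≤ amax (fun a => bellmanBackup p γ r V s a + γ * c) :=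
      amax_mono (bellmanBackup_add_const_le hp_sum hγ0 r V hc s)
    _ = bellmanOperator p γ r V s + γ * c := amax_add_const _ _

theorem le_of_le_bellmanOperator_of_bellmanOperator_le (hp_nonneg : ∀ s a s', 0 ≤ p s a s')
    (hp_sum : ∀ s a, ∑ s', p s a s' ≤ 1) (hγ0 : 0 ≤ γ) (hγ1 : γ < 1)
    {r : S → A → ℝ} {V W : S → ℝ}
    (hV : V ≤ bellmanOperator p γ r V) (hW : bellmanOperator p γ r W ≤ W) : V ≤ W :=
  le_of_monotone_of_discounting (bellmanOperator_mono hp_nonneg hγ0 r)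
    (fun U _ hc => bellmanOperator_add_const_le hp_sum hγ0 r U hc) hγ1 hV hW
    (Set.finite_range _).bddAbove

theorem qFunction_le_of_reward_le (hp_nonneg : ∀ s a s', 0 ≤ p s a s')
    (hp_sum : ∀ s a, ∑ s', p s a s' ≤ 1) (hγ0 : 0 ≤ γ) (hγ1 : γ < 1)
    {r r' : S → A → ℝ} (hr : r ≤ r') {Q Q' : S → A → ℝ}
    (hQ : Q ≤ bellmanBackup p γ r fun s => amax (Q s))
    (hQ' : bellmanBackup p γ r' (fun s => amax (Q' s)) ≤ Q') : Q ≤ Q' := by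
  have hQr' : Q ≤ bellmanBackup p γ r' fun s => amax (Q s) :=
    hQ.trans (bellmanBackup_mono hp_nonneg hγ0 hr le_rfl)
  have hvalue : (fun s => amax (Q s)) ≤ fun s => amax (Q' s) :=
    le_of_le_bellmanOperator_of_bellmanOperator_le hp_nonneg hp_sum hγ0 hγ1
      (fun s => amax_mono (hQr' s)) (fun s => amax_mono (hQ' s))
  calc
    Q ≤ bellmanBackup p γ r' (fun s => amax (Q s)) := hQr'
    _ ≤ bellmanBackup p γ r' (fun s => amax (Q' s)) :=
      bellmanBackup_mono hp_nonneg hγ0 le_rfl hvalue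
    _ ≤ Q' := hQ'

theorem and_composition_standard_rl_general {ι : Type*} [Fintype ι] [Nonempty ι]
    (hp_nonneg : ∀ s a s', 0 ≤ p s a s') (hp_sum : ∀ s a, ∑ s', p s a s' ≤ 1)
    (hγ0 : 0 ≤ γ) (hγ1 : γ < 1) {r Q : ι → S → A → ℝ}
    (hQ : ∀ k, bellmanBackup p γ (r k) (fun s => amax (Q k s)) ≤ Q k) {Qt : S → A → ℝ}
    (hQt : Qt ≤ bellmanBackup p γ (fun s a => amin fun k => r k s a) fun s => amax (Qt s))
    (s : S) (a : A) : Qt s a ≤ amin fun k => Q k s a :=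
  Finset.le_inf' _ _ fun k _ =>
    qFunction_le_of_reward_le hp_nonneg hp_sum hγ0 hγ1 (fun s a => amin_le (fun k => r k s a) k)
      hQt (hQ k) s a

end Bellman

/-- **AND composition, standard RL:** the optimal Q-function of the min-composite reward
is dominated by the min of the primitive optimal Q-functions. -/
theorem and_composition_standard_rl
    {S A : Type*} [Fintype S] [Fintype A] [Nonempty S] [Nonempty A]
    (p : S → A → S → ℝ)
    (hp_nonneg : ∀ s a s', 0 ≤ p s a s')
    (hp_sum : ∀ s a, ∑ s', p s a s' = 1)
    (γ : ℝ) (hγ0 : 0 < γ) (hγ1 : γ < 1)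
    (M : ℕ) [NeZero M]
    (r : Fin M → S → A → ℝ)
    -- Q k is the optimal Q-function for reward r k
    (Q : Fin M → S → A → ℝ)
    (hQ : ∀ k s a, Q k s a = r k s a + γ * ∑ s', p s a s' * amax (fun a' => Q k s' a'))
    -- Q̃ is the optimal Q-function for the AND-composite reward
    (Qt : S → A → ℝ)
    (hQt : ∀ s a, Qt s a = amin (fun k => r k s a)
      + γ * ∑ s', p s a s' * amax (fun a' => Qt s' a')) :
    ∀ s a, Qt s a ≤ amin (fun k => Q k s a) :=
  and_composition_standard_rl_general hp_nonneg (fun s a => (hp_sum s a).le) hγ0.le hγ1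
    (fun k s a => (hQ k s a).ge) fun s a => (hQt s a).le
end

section
/- For k = 1, …, M, let Q^(k) be the optimal soft Q-function for reward r^(k), and let α₁, …, α_M ≥ 0 with ∑_{k=1}^M α_k = 1 be convex weights. If Q̃ is the optimal soft Q-function for the convexly combined reward (s,a) ↦ ∑_{k=1}^M α_k·r^(k)(s,a), then for all (s,a): Q̃(s,a) ≤ ∑_{k=1}^M α_k·Q^(k)(s,a). -/
/-!
The soft Bellman operator is monotone, jointly convex in the reward and the Q-function, and, for
`0 ≤ c`, raises its value by at most `γ * c` when `c` is added to the Q-function. By convexity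
`∑ k, α k • Q k` is a supersolution of the soft Bellman equation for the combined reward. A
subsolution lies below a supersolution, since the maximum `c` of their difference would satisfy
`c ≤ γ * c` if it were positive.
-/

open Finset

/-- The soft (log-sum-exp) value of `g` under the prior action distribution `π0`. -/
noncomputable def softV {A : Type*} [Fintype A] (π0 : A → ℝ) (g : A → ℝ) : ℝ :=
  Real.log (∑ a, π0 a * Real.exp (g a))

theorem convexOn_sum {𝕜 E β ι : Type*} [Semiring 𝕜] [PartialOrder 𝕜] [AddCommMonoid E]
    [AddCommMonoid β] [PartialOrder β] [IsOrderedAddMonoid β] [SMul 𝕜 E] [Module 𝕜 β]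
    {C : Set E} (hC : Convex 𝕜 C) {t : Finset ι} {f : ι → E → β}
    (hf : ∀ i ∈ t, ConvexOn 𝕜 C (f i)) : ConvexOn 𝕜 C fun x => ∑ i ∈ t, f i x := by
  refine ⟨hC, fun x hx y hy a b ha hb hab => ?_⟩
  simp only [Finset.smul_sum, ← Finset.sum_add_distrib]
  exact Finset.sum_le_sum fun i hi => (hf i hi).2 hx hy ha hb hab

section SoftValue

variable {A : Type*} [Fintype A] {w : A → ℝ}

theorem sum_mul_exp_pos (hw : 0 < w) (g : A → ℝ) : 0 < ∑ a, w a * Real.exp (g a) := by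
  obtain ⟨hw_nonneg, a, ha⟩ := Pi.lt_def.1 hw
  exact Finset.sum_pos' (fun b _ => mul_nonneg (hw_nonneg b) (Real.exp_pos _).le)
    ⟨a, mem_univ a, mul_pos ha (Real.exp_pos _)⟩

theorem softV_mono (hw : 0 < w) : Monotone (softV w) := fun _ _ hgh =>
  Real.log_le_log (sum_mul_exp_pos hw _) <| Finset.sum_le_sum fun a _ =>
    mul_le_mul_of_nonneg_left (Real.exp_le_exp.2 (hgh a)) (hw.le a)

theorem softV_add_const (hw : 0 < w) (g : A → ℝ) (c : ℝ) :
    softV w (fun a => g a + c) = softV w g + c := by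
  simp only [softV, Real.exp_add, ← mul_assoc, ← Finset.sum_mul]
  rw [Real.log_mul (sum_mul_exp_pos hw g).ne' (Real.exp_ne_zero c), Real.log_exp]

theorem softV_le_iff (hw : 0 < w) {g : A → ℝ} {c : ℝ} :
    softV w g ≤ c ↔ ∑ a, w a * Real.exp (g a - c) ≤ 1 := by
  simp only [softV, Real.log_le_iff_le_exp (sum_mul_exp_pos hw g), Real.exp_sub, ← mul_div_assoc,
    ← Finset.sum_div, div_le_one (Real.exp_pos c)]

-- The epigraph of `softV w` is a sublevel set of `(g, c) ↦ ∑ a, w a * exp (g a - c)`, which is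
-- convex because `exp` is.
theorem convexOn_softV (hw : 0 < w) : ConvexOn ℝ Set.univ (softV w) := by
  have hexp : ConvexOn ℝ Set.univ
      fun x : (A → ℝ) × ℝ => ∑ a, w a * Real.exp (x.1 a - x.2) :=
    convexOn_sum convex_univ fun a _ => (convexOn_exp.comp_linearMap
      (LinearMap.proj a ∘ₗ LinearMap.fst ℝ (A → ℝ) ℝ - LinearMap.snd ℝ (A → ℝ) ℝ)).smul (hw.le a)
  refine convexOn_of_convex_epigraph ?_
  simpa only [Set.mem_univ, true_and, softV_le_iff hw] using hexp.convex_le 1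

end SoftValue

section SoftBellman

variable {S A : Type*} [Fintype S] [Fintype A]

/-- The soft Bellman optimality operator at inverse temperature `1`, acting on Q-functions. The
optimal soft Q-function for the reward `r` is its fixed point; inequalities
`Q ≤ softBellman γ p π₀ r Q` and `softBellman γ p π₀ r Q ≤ Q` express that `Q` is a sub- or
supersolution. -/
noncomputable def softBellman (γ : ℝ) (p : S → A → S → ℝ) (π₀ r Q : S → A → ℝ) : S → A → ℝ :=
  fun s a => r s a + γ * ∑ s', p s a s' * softV (π₀ s') (Q s')

variable {γ : ℝ} {p : S → A → S → ℝ} {π₀ : S → A → ℝ}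

theorem softBellman_mono (hγ : 0 ≤ γ) (hp : ∀ s a s', 0 ≤ p s a s') (hπ₀ : ∀ s, 0 < π₀ s)
    (r : S → A → ℝ) : Monotone (softBellman γ p π₀ r) := fun Q Q' hQ s a => by
  unfold softBellman
  gcongr with s'
  · exact hp s a s'
  · exact softV_mono (hπ₀ s') (hQ s')

theorem softBellman_add_const_le (hγ : 0 ≤ γ) (hp_sum : ∀ s a, ∑ s', p s a s' ≤ 1)
    (hπ₀ : ∀ s, 0 < π₀ s) (r Q : S → A → ℝ) {c : ℝ} (hc : 0 ≤ c) (s : S) (a : A) :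
    softBellman γ p π₀ r (fun s a => Q s a + c) s a ≤ softBellman γ p π₀ r Q s a + γ * c := by
  simp only [softBellman, softV_add_const (hπ₀ _), mul_add, Finset.sum_add_distrib,
    ← Finset.sum_mul, ← add_assoc]
  gcongr
  exact mul_le_of_le_one_left hc (hp_sum s a)

theorem convexOn_softBellman (hγ : 0 ≤ γ) (hp : ∀ s a s', 0 ≤ p s a s') (hπ₀ : ∀ s, 0 < π₀ s)
    (s : S) (a : A) :
    ConvexOn ℝ Set.univ
      fun x : (S → A → ℝ) × (S → A → ℝ) => softBellman γ p π₀ x.1 x.2 s a := by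
  let reward : (S → A → ℝ) × (S → A → ℝ) →ₗ[ℝ] ℝ :=
    LinearMap.proj a ∘ₗ LinearMap.proj s ∘ₗ LinearMap.fst ℝ _ _
  let row (s' : S) : (S → A → ℝ) × (S → A → ℝ) →ₗ[ℝ] A → ℝ :=
    LinearMap.proj s' ∘ₗ LinearMap.snd ℝ _ _
  have hvalue : ConvexOn ℝ Set.univ fun x => ∑ s', p s a s' * softV (π₀ s') (row s' x) :=
    convexOn_sum convex_univ fun s' _ =>
      ((convexOn_softV (hπ₀ s')).comp_linearMap (row s')).smul (hp s a s')
  exact (reward.convexOn convex_univ).add (hvalue.smul hγ)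

theorem softBellman_sum_smul_le (hγ : 0 ≤ γ) (hp : ∀ s a s', 0 ≤ p s a s')
    (hπ₀ : ∀ s, 0 < π₀ s) {ι : Type*} {t : Finset ι} {α : ι → ℝ} (hα : ∀ k ∈ t, 0 ≤ α k)
    (hα_sum : ∑ k ∈ t, α k = 1) (r Q : ι → S → A → ℝ) :
    softBellman γ p π₀ (∑ k ∈ t, α k • r k) (∑ k ∈ t, α k • Q k)
      ≤ ∑ k ∈ t, α k • softBellman γ p π₀ (r k) (Q k) := fun s a => by
  simpa only [Prod.fst_sum, Prod.snd_sum, Prod.smul_fst, Prod.smul_snd, Finset.sum_apply,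
    Pi.smul_apply] using (convexOn_softBellman hγ hp hπ₀ s a).map_sum_le
      (p := fun k => (r k, Q k)) hα hα_sum fun _ _ => Set.mem_univ _

theorem le_of_le_softBellman_of_softBellman_le (hγ : 0 ≤ γ) (hγ_lt : γ < 1)
    (hp : ∀ s a s', 0 ≤ p s a s') (hp_sum : ∀ s a, ∑ s', p s a s' ≤ 1) (hπ₀ : ∀ s, 0 < π₀ s)
    {r Q Q' : S → A → ℝ} (hQ : Q ≤ softBellman γ p π₀ r Q) (hQ' : softBellman γ p π₀ r Q' ≤ Q') :
    Q ≤ Q' := by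
  by_contra hlt
  obtain ⟨s₁, a₁, h₁⟩ : ∃ s a, Q' s a < Q s a := by simpa [Pi.le_def] using hlt
  have : Nonempty (S × A) := ⟨(s₁, a₁)⟩
  obtain ⟨⟨s, a⟩, hmax⟩ := Finite.exists_max fun x : S × A => Q x.1 x.2 - Q' x.1 x.2
  set c := Q s a - Q' s a
  have hc_pos : 0 < c := (sub_pos.2 h₁).trans_le (hmax (s₁, a₁))
  have hQ_le : Q ≤ fun s a => Q' s a + c := fun s a => sub_le_iff_le_add'.1 (hmax (s, a))
  have hstep : Q s a ≤ Q' s a + γ * c := calc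
    Q s a ≤ softBellman γ p π₀ r Q s a := hQ s a
    _ ≤ softBellman γ p π₀ r (fun s a => Q' s a + c) s a :=
      softBellman_mono hγ hp hπ₀ r hQ_le s a
    _ ≤ softBellman γ p π₀ r Q' s a + γ * c :=
      softBellman_add_const_le hγ hp_sum hπ₀ r Q' hc_pos.le s a
    _ ≤ Q' s a + γ * c := by gcongr; exact hQ' s a
  have hcontract : γ * c < c := mul_lt_of_lt_one_left hc_pos hγ_lt
  linarith

theorem convex_combination_entreg_rl_general (hγ : 0 ≤ γ) (hγ_lt : γ < 1)
    (hp : ∀ s a s', 0 ≤ p s a s') (hp_sum : ∀ s a, ∑ s', p s a s' ≤ 1) (hπ₀ : ∀ s, 0 < π₀ s)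
    {ι : Type*} {t : Finset ι} {α : ι → ℝ} (hα : ∀ k ∈ t, 0 ≤ α k) (hα_sum : ∑ k ∈ t, α k = 1)
    {r Q : ι → S → A → ℝ} (hQ : ∀ k ∈ t, softBellman γ p π₀ (r k) (Q k) ≤ Q k)
    {Qt : S → A → ℝ}
    (hQt : Qt ≤ softBellman γ p π₀ (fun s a => ∑ k ∈ t, α k * r k s a) Qt) (s : S) (a : A) :
    Qt s a ≤ ∑ k ∈ t, α k * Q k s a := by
  have hreward : (fun s a => ∑ k ∈ t, α k * r k s a) = ∑ k ∈ t, α k • r k := by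
    ext; simp
  rw [hreward] at hQt
  have hsuper : softBellman γ p π₀ (∑ k ∈ t, α k • r k) (∑ k ∈ t, α k • Q k)
      ≤ ∑ k ∈ t, α k • Q k :=
    (softBellman_sum_smul_le hγ hp hπ₀ hα hα_sum r Q).trans <|
      Finset.sum_le_sum fun k hk => smul_le_smul_of_nonneg_left (hQ k hk) (hα k hk)
  simpa only [Finset.sum_apply, Pi.smul_apply, smul_eq_mul] using
    le_of_le_softBellman_of_softBellman_le hγ hγ_lt hp hp_sum hπ₀ hQt hsuper s a

end SoftBellman

/-- **Convex combination of rewards, entropy-regularized RL.** -/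
theorem convex_combination_entreg_rl
    {S A : Type*} [Fintype S] [Fintype A] [Nonempty S] [Nonempty A]
    (p : S → A → S → ℝ)
    (hp_nonneg : ∀ s a s', 0 ≤ p s a s')
    (hp_sum : ∀ s a, ∑ s', p s a s' = 1)
    (γ : ℝ) (hγ0 : 0 < γ) (hγ1 : γ < 1)
    -- prior policy
    (π0 : S → A → ℝ)
    (hπ0_pos : ∀ s a, 0 < π0 s a)
    (hπ0_sum : ∀ s, ∑ a, π0 s a = 1)
    (M : ℕ)
    (r : Fin M → S → A → ℝ)
    -- Q k is the optimal soft Q-function for reward r k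
    (Q : Fin M → S → A → ℝ)
    (hQ : ∀ k s a, Q k s a = r k s a
      + γ * ∑ s', p s a s' * softV (π0 s') (fun a' => Q k s' a'))
    -- convex weights
    (α : Fin M → ℝ)
    (hα_nonneg : ∀ k, 0 ≤ α k)
    (hα_sum : ∑ k, α k = 1)
    -- Q̃ is the optimal soft Q-function for the convexly combined reward
    (Qt : S → A → ℝ)
    (hQt : ∀ s a, Qt s a = (∑ k, α k * r k s a)
      + γ * ∑ s', p s a s' * softV (π0 s') (fun a' => Qt s' a')) :
    ∀ s a, Qt s a ≤ ∑ k, α k * Q k s a :=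
  convex_combination_entreg_rl_general hγ0.le hγ1 hp_nonneg (fun s a => (hp_sum s a).le)
    (fun s => lt_of_strongLT (hπ0_pos s)) (fun k _ => hα_nonneg k) hα_sum
    (fun k _ s a => (hQ k s a).ge) fun s a => (hQt s a).le
end
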